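/- Let k ≥ 2, n ≥ 2k, and let X = {x_1,…,x_n} be a (2k)-independent subset of a vector space W over a division ring with dim W ≥ 2k. If an inexact subset of J_k(X) consists of exactly a(n,k) = C(n−2,k−2) + C(n−1,k) elements, then it is a special subset of J_k(X). -/

import Mathlib

/-!
Since any two `k`-element sets of indices have a union of size at most `2k`, the
`2k`-independence of `x` gives `span x(A) ⊓ span x(B) = span x(A ∩ B)` whenever
`|A|, |B| ≤ k` (`MIndep.span_inf_span`), and the same for `y`.

Suppose `Z ⊆ J_k(X) ∩ J_k(Y)` and that for all `i ≠ j` some member of `Z` contains `x i` but not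
`x j`. Intersecting enough members of `Z` then yields the line of `x i`, and this line is also
spanned by some of the `y`'s, hence by a single `y m` (`exists_span_singleton_eq`). So the lines of
`x` and of `y` agree up to a permutation and `J_k(X) = J_k(Y)`. Consequently, if `J_k(X) ≠ J_k(Y)`,
there are `i ≠ j` such that every member of `Z` containing `x i` contains `x j`, i.e. `Z` lies
in the special subset of `i, j`. A special subset has at most
`C(n-2,k-2) + C(n-1,k)` elements, so equality of cardinalities forces `Z` to be all of it.
-/


open Submodule Set Function Module

/-- A family of vectors is `m`-independent if every `m`-element subfamily is
linearly independent. -/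
def MIndep (R : Type*) {W : Type*} [DivisionRing R] [AddCommGroup W] [Module R W]
    {n : ℕ} (m : ℕ) (x : Fin n → W) : Prop :=
  ∀ A : Finset (Fin n), A.card = m → LinearIndependent R (fun i : A => x (i : Fin n))

/-- `J_k(X)`: the set of all `k`-dimensional subspaces spanned by `k`-element subsets of
the family `x`. -/
def JkSet (R : Type*) {W : Type*} [DivisionRing R] [AddCommGroup W] [Module R W]
    {n : ℕ} (k : ℕ) (x : Fin n → W) : Set (Submodule R W) :=
  {P | ∃ A : Finset (Fin n), A.card = k ∧ P = Submodule.span R (x '' ↑A)}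

/-- The special subset `J(+i,+j) ∪ J(-i)` of `J = J_k(X)`: all members of `J` which either
contain both `x i` and `x j`, or do not contain `x i`. -/
def SpecialSubset (R : Type*) {W : Type*} [DivisionRing R] [AddCommGroup W] [Module R W]
    {n : ℕ} (k : ℕ) (x : Fin n → W) (i j : Fin n) : Set (Submodule R W) :=
  {P | P ∈ JkSet R k x ∧ ((x i ∈ P ∧ x j ∈ P) ∨ x i ∉ P)}

/-- A subset `Z` of `J = J_k(X)` is inexact if there is a `(2k)`-independent `n`-element
family `y` with `J_k(Y) ≠ J` and `Z ⊆ J_k(Y)`. -/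
def InexactIn (R : Type*) {W : Type*} [DivisionRing R] [AddCommGroup W] [Module R W]
    (n k : ℕ) (J : Set (Submodule R W)) (Z : Set (Submodule R W)) : Prop :=
  ∃ y : Fin n → W, Function.Injective y ∧ MIndep R (2 * k) y ∧
    JkSet R k y ≠ J ∧ Z ⊆ JkSet R k y

section Helpers

variable {K W : Type*} [DivisionRing K] [AddCommGroup W] [Module K W] {n k : ℕ}

theorem MIndep.linearIndepOn {m : ℕ} {x : Fin n → W} (hx : MIndep K m x) (hn : m ≤ n)
    {A : Finset (Fin n)} (hA : A.card ≤ m) : LinearIndepOn K x (A : Set (Fin n)) := by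
  obtain ⟨B, hAB, -, hB⟩ := Finset.exists_subsuperset_card_eq (Finset.subset_univ A) hA
    (by simpa using hn)
  have h : LinearIndepOn K x (B : Set (Fin n)) := hx B hB
  exact h.mono (by exact_mod_cast hAB)

theorem MIndep.span_inf_span {x : Fin n → W} (hx : MIndep K (2 * k) x) (hn : 2 * k ≤ n)
    {A B : Finset (Fin n)} (hA : A.card ≤ k) (hB : B.card ≤ k) :
    span K (x '' (A : Set (Fin n))) ⊓ span K (x '' (B : Set (Fin n))) =
      span K (x '' ((A ∩ B : Finset (Fin n)) : Set (Fin n))) := by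
  have hind : LinearIndepOn K x ((A ∪ B : Finset (Fin n)) : Set (Fin n)) :=
    hx.linearIndepOn hn ((Finset.card_union_le A B).trans (by omega))
  rw [linearIndepOn_iffₛ] at hind
  apply le_antisymm
  · rintro z ⟨h1, h2⟩
    obtain ⟨f, hf, hfz⟩ := (Finsupp.mem_span_image_iff_linearCombination K).1 h1
    obtain ⟨g, hg, hgz⟩ := (Finsupp.mem_span_image_iff_linearCombination K).1 h2
    have hfg : f = g := hind f (Finsupp.supported_mono (by simp) hf) g
      (Finsupp.supported_mono (by simp) hg) (hfz.trans hgz.symm)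
    subst hfg
    refine (Finsupp.mem_span_image_iff_linearCombination K).2 ⟨f, ?_, hfz⟩
    rw [Finsupp.mem_supported] at hf hg ⊢
    rw [Finset.coe_inter]
    exact Set.subset_inter hf hg
  · exact le_inf (span_mono (Set.image_mono (by simp))) (span_mono (Set.image_mono (by simp)))

theorem MIndep.mem_of_mem_span {x : Fin n → W} (hx : MIndep K (2 * k) x) (hk : 1 ≤ k)
    (hn : 2 * k ≤ n) {A : Finset (Fin n)} (hA : A.card ≤ k) {i : Fin n}
    (hi : x i ∈ span K (x '' (A : Set (Fin n)))) : i ∈ A := by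
  have h : LinearIndepOn K x ((insert i A : Finset (Fin n)) : Set (Fin n)) :=
    hx.linearIndepOn hn ((Finset.card_insert_le i A).trans (by omega))
  rw [Finset.coe_insert] at h
  by_contra hiA
  exact (linearIndepOn_insert (by simpa using hiA)).1 h |>.2 hi

/-- If members of `Z` separate `x i` from every other `x j`, the line of `x i` is an intersection
of members of `Z`, hence is spanned by part of `y`, hence by one `y m`. -/
theorem exists_span_singleton_eq {x y : Fin n → W} (hk : 2 ≤ k) (hn : 2 * k ≤ n)
    (hx : MIndep K (2 * k) x) (hy : MIndep K (2 * k) y) {Z : Set (Submodule K W)}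
    (hZx : Z ⊆ JkSet K k x) (hZy : Z ⊆ JkSet K k y) (i : Fin n)
    (hsep : ∀ j, i ≠ j → ∃ P ∈ Z, x i ∈ P ∧ x j ∉ P) :
    ∃ m, span K {x i} = span K {y m} := by
  -- Among subspaces spanned both by part of `x` and by part of `y`, one whose `x`-index set `A`
  -- contains `i` and some `j ≠ i` shrinks on intersecting with a member of `Z` separating `i`, `j`.
  have key : ∀ (c : ℕ) (A B : Finset (Fin n)), A.card = c → A.card ≤ k → B.card ≤ k → i ∈ A →
      span K (x '' (A : Set (Fin n))) = span K (y '' (B : Set (Fin n))) →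
      ∃ C : Finset (Fin n), C.card ≤ k ∧ span K {x i} = span K (y '' (C : Set (Fin n))) := by
    intro c
    induction c using Nat.strong_induction_on with
    | _ c ih =>
      intro A B hc hA hB hi hAB
      by_cases hAi : A = {i}
      · subst hAi
        exact ⟨B, hB, by simpa using hAB⟩
      · obtain ⟨j, hjA, hji⟩ : ∃ j ∈ A, j ≠ i := by
          by_contra! h
          exact hAi (Finset.eq_singleton_iff_unique_mem.2 ⟨hi, h⟩)
        obtain ⟨P, hP, hiP, hjP⟩ := hsep j hji.symm
        obtain ⟨A', hA', rfl⟩ := hZx hP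
        obtain ⟨B', hB', hPB⟩ := hZy hP
        have hi' : i ∈ A' := hx.mem_of_mem_span (by omega) hn hA'.le hiP
        have hj' : j ∉ A' := fun h => hjP (subset_span ⟨j, by exact_mod_cast h, rfl⟩)
        have hlt : (A ∩ A').card < A.card := Finset.card_lt_card
          ⟨Finset.inter_subset_left, fun h => hj' (Finset.mem_inter.1 (h hjA)).2⟩
        refine ih (A ∩ A').card (hc ▸ hlt) (A ∩ A') (B ∩ B') rfl (by omega)
          ((Finset.card_le_card Finset.inter_subset_left).trans hB)
          (Finset.mem_inter.2 ⟨hi, hi'⟩) ?_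
        rw [← hx.span_inf_span hn hA hA'.le, ← hy.span_inf_span hn hB hB'.le, hAB, hPB]
  have : Nontrivial (Fin n) := Fin.nontrivial_iff_two_le.2 (by omega)
  obtain ⟨j, hj⟩ := exists_ne i
  obtain ⟨P, hP, hiP, -⟩ := hsep j hj.symm
  obtain ⟨A, hA, rfl⟩ := hZx hP
  obtain ⟨B, hB, hPB⟩ := hZy hP
  obtain ⟨C, hC, hiC⟩ := key _ A B rfl hA.le hB.le
    (hx.mem_of_mem_span (by omega) hn hA.le hiP) hPB
  have hxi : x i ≠ 0 := by
    have h := hx.linearIndepOn hn (A := {i}) (by simp; omega)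
    exact h.ne_zero (by simp)
  have hyC : LinearIndependent K (fun c : C => y c) := hy.linearIndepOn hn (by omega)
  have hcard : C.card = 1 := by
    have h1 := finrank_span_eq_card hyC
    have h2 : Set.range (fun c : C => y c) = y '' (C : Set (Fin n)) := by
      ext z; simp
    rw [h2, ← hiC, finrank_span_singleton hxi, Fintype.card_coe] at h1
    exact h1.symm
  obtain ⟨m, rfl⟩ := Finset.card_eq_one.1 hcard
  exact ⟨m, by simpa using hiC⟩

theorem JkSet_subset_of_perm {x y : Fin n → W} (e : Equiv.Perm (Fin n))
    (h : ∀ i, span K {x i} = span K {y (e i)}) : JkSet K k x ⊆ JkSet K k y := by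
  rintro P ⟨A, hA, rfl⟩
  refine ⟨A.map e.toEmbedding, by simpa using hA, ?_⟩
  rw [Finset.coe_map, Set.image_image, span_eq_iSup_of_singleton_spans,
    span_eq_iSup_of_singleton_spans]
  simp only [iSup_image, h, Equiv.coe_toEmbedding]

theorem specialSubset_finite_and_ncard_le {x : Fin n → W} (hx : MIndep K (2 * k) x) (hk : 2 ≤ k)
    (hn : 2 * k ≤ n) {i j : Fin n} (hij : i ≠ j) :
    (SpecialSubset K k x i j).Finite ∧
      (SpecialSubset K k x i j).ncard ≤ (n - 2).choose (k - 2) + (n - 1).choose k := by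
  classical
  let F : Finset (Finset (Fin n)) :=
    (((Finset.univ.erase i).erase j).powersetCard (k - 2)).image (fun A => insert i (insert j A)) ∪
      (Finset.univ.erase i).powersetCard k
  let f : Finset (Fin n) → Submodule K W := fun A => span K (x '' (A : Set (Fin n)))
  have hsub : SpecialSubset K k x i j ⊆ ((F.image f : Finset _) : Set (Submodule K W)) := by
    rintro P ⟨⟨A, hA, rfl⟩, h⟩
    rw [Finset.mem_coe]
    refine Finset.mem_image.2 ⟨A, ?_, rfl⟩
    rcases h with ⟨hi, hj⟩ | hi
    · have hi := hx.mem_of_mem_span (by omega) hn hA.le hi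
      have hj := hx.mem_of_mem_span (by omega) hn hA.le hj
      refine Finset.mem_union_left _ (Finset.mem_image.2 ⟨(A.erase i).erase j, ?_, ?_⟩)
      · refine Finset.mem_powersetCard.2 ⟨?_, ?_⟩
        · exact Finset.erase_subset_erase _ (Finset.erase_subset_erase _ (Finset.subset_univ _))
        · rw [Finset.card_erase_of_mem (Finset.mem_erase.2 ⟨hij.symm, hj⟩),
            Finset.card_erase_of_mem hi, hA]
          omega
      · rw [Finset.insert_erase (Finset.mem_erase.2 ⟨hij.symm, hj⟩), Finset.insert_erase hi]
    · refine Finset.mem_union_right _ (Finset.mem_powersetCard.2 ⟨?_, hA⟩)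
      intro a ha
      refine Finset.mem_erase.2 ⟨?_, Finset.mem_univ _⟩
      rintro rfl
      exact hi (subset_span ⟨a, by exact_mod_cast ha, rfl⟩)
  refine ⟨(Finset.finite_toSet _).subset hsub, ?_⟩
  have hF : F.card ≤ (n - 2).choose (k - 2) + (n - 1).choose k := by
    refine (Finset.card_union_le _ _).trans (Nat.add_le_add ?_ ?_)
    · refine Finset.card_image_le.trans ?_
      rw [Finset.card_powersetCard,
        Finset.card_erase_of_mem (Finset.mem_erase.2 ⟨hij.symm, Finset.mem_univ _⟩),
        Finset.card_erase_of_mem (Finset.mem_univ _), Finset.card_univ, Fintype.card_fin]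
      exact le_of_eq rfl
    · rw [Finset.card_powersetCard, Finset.card_erase_of_mem (Finset.mem_univ _),
        Finset.card_univ, Fintype.card_fin]
  calc _ ≤ ((F.image f : Finset _) : Set (Submodule K W)).ncard :=
        Set.ncard_le_ncard hsub (Finset.finite_toSet _)
    _ = (F.image f).card := Set.ncard_coe_finset _
    _ ≤ F.card := Finset.card_image_le
    _ ≤ _ := hF

end Helpers

/-- If an inexact subset of `J_k(X)` consists of exactly
`a(n,k) = C(n-2,k-2) + C(n-1,k)` elements then it is a special subset of `J_k(X)`. -/
theorem inexact_card_eq_special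
    {K W : Type*} [DivisionRing K] [AddCommGroup W] [Module K W]
    (n k : ℕ) (hk : 2 ≤ k) (hn : 2 * k ≤ n)
    (hW : ((2 * k : ℕ) : Cardinal) ≤ Module.rank K W)
    (x : Fin n → W) (hxinj : Function.Injective x) (hx : MIndep K (2 * k) x)
    (Z : Set (Submodule K W)) (hZJ : Z ⊆ JkSet K k x)
    (hZ : InexactIn K n k (JkSet K k x) Z)
    (hcard : Z.ncard = Nat.choose (n - 2) (k - 2) + Nat.choose (n - 1) k) :
    ∃ i j : Fin n, i ≠ j ∧ Z = SpecialSubset K k x i j := by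
  obtain ⟨y, -, hy, hne, hZy⟩ := hZ
  obtain ⟨i, j, hij, h⟩ : ∃ i j : Fin n, i ≠ j ∧ ∀ P ∈ Z, x i ∈ P → x j ∈ P := by
    by_contra! hsep
    choose σ hσ using fun i => exists_span_singleton_eq hk hn hx hy hZJ hZy i (hsep i)
    have hinj : Function.Injective σ := by
      intro a b hab
      have h1 : span K {x a} = span K {x b} := by rw [hσ, hσ, hab]
      have h2 : x a ∈ span K (x '' (({b} : Finset (Fin n)) : Set (Fin n))) := by
        simpa [h1] using mem_span_singleton_self (R := K) (x a)
      simpa using hx.mem_of_mem_span (by omega) hn (by simp; omega) h2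
    let e : Equiv.Perm (Fin n) := Equiv.ofBijective σ (Finite.injective_iff_bijective.1 hinj)
    have he : ∀ i, span K {x i} = span K {y (e i)} := hσ
    refine hne (Set.Subset.antisymm (JkSet_subset_of_perm e.symm fun m => ?_)
      (JkSet_subset_of_perm e he))
    rw [he, Equiv.apply_symm_apply]
  obtain ⟨hfin, hle⟩ := specialSubset_finite_and_ncard_le hx hk hn hij
  refine ⟨i, j, hij, Set.eq_of_subset_of_ncard_le (fun P hP => ⟨hZJ hP, ?_⟩)
    (hcard ▸ hle) hfin⟩
  by_cases hi : x i ∈ P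
  · exact Or.inl ⟨hi, h P hP hi⟩
  · exact Or.inr hi
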